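/- Let E be a real vector space, let I be a finite index set (a Finset), let A : I → Set E be a family of sets, and let l : E → ℝ be a linear functional. Then the set of maximizers of l on the Minkowski sum ∑_{i ∈ I} A i equals the Minkowski sum of the maximizer sets: {x ∈ ∑_{i ∈ I} A i | ∀ y ∈ ∑_{i ∈ I} A i, l y ≤ l x} = ∑_{i ∈ I} {x ∈ A i | ∀ y ∈ A i, l y ≤ l x}. -/

import Mathlib

open Pointwise

/-- The binary case: faces of a Minkowski sum. -/
theorem maximizers_add_aux {E : Type*} [AddCommGroup E] [Module ℝ E]
    (A B : Set E) (l : E →ₗ[ℝ] ℝ) :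
    {x ∈ A + B | ∀ y ∈ A + B, l y ≤ l x} =
      {x ∈ A | ∀ y ∈ A, l y ≤ l x} + {x ∈ B | ∀ y ∈ B, l y ≤ l x} := by
  ext x
  constructor
  · rintro ⟨hx, h⟩
    obtain ⟨a, ha, b, hb, rfl⟩ := Set.mem_add.1 hx
    refine Set.add_mem_add ⟨ha, fun y hy => ?_⟩ ⟨hb, fun y hy => ?_⟩
    · have := h _ (Set.add_mem_add hy hb)
      simpa using this
    · have := h _ (Set.add_mem_add ha hy)
      simpa using this
  · intro hx
    obtain ⟨a, ⟨ha, ha'⟩, b, ⟨hb, hb'⟩, rfl⟩ := Set.mem_add.1 hx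
    refine ⟨Set.add_mem_add ha hb, fun y hy => ?_⟩
    obtain ⟨c, hc, d, hd, rfl⟩ := Set.mem_add.1 hy
    rw [map_add, map_add]
    exact add_le_add (ha' c hc) (hb' d hd)

theorem maximizers_finset_minkowski_sum {E : Type*} [AddCommGroup E] [Module ℝ E]
    {ι : Type*} (I : Finset ι) (A : ι → Set E) (l : E →ₗ[ℝ] ℝ) :
    {x ∈ ∑ i ∈ I, A i | ∀ y ∈ ∑ i ∈ I, A i, l y ≤ l x} =
      ∑ i ∈ I, {x ∈ A i | ∀ y ∈ A i, l y ≤ l x} := by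
  induction I using Finset.cons_induction with
  | empty =>
    ext x
    simp only [Finset.sum_empty, Set.mem_setOf_eq, Set.mem_zero]
    constructor
    · exact fun h => h.1
    · rintro rfl
      exact ⟨rfl, fun y hy => by rw [hy]⟩
  | cons i s hi ih =>
    rw [Finset.sum_cons, Finset.sum_cons, maximizers_add_aux, ih]
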